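/- Let k > 0 and 0 < c < 1 be real. For x ∈ ℕ define the sequence v⁽ˣ⁾ by v⁽ˣ⁾_n = M̂_n(x; 2k, c)·√(w(x; 2k, c)) for n ∈ ℕ. Then: (i) each v⁽ˣ⁾ lies in ℓ²(ℕ; ℝ) and the family (v⁽ˣ⁾)_{x∈ℕ} is an orthonormal basis of ℓ²(ℕ; ℝ); (ii) for every n ∈ ℕ (with the convention v⁽ˣ⁾_{−1} := 0), √(n(2k+n−1)) v⁽ˣ⁾_{n−1} − ((1+c)(k+n)/√c) v⁽ˣ⁾_n + √((n+1)(2k+n)) v⁽ˣ⁾_{n+1} = ((c−1)(x+k)/√c) v⁽ˣ⁾_n. In representation-theoretic terms, v⁽ˣ⁾ is a unit eigenvector of π_k^+(X_c) with eigenvalue (c−1)(x+k)/√c (and of π_k^−(X_c) with eigenvalue −(c−1)(x+k)/√c), where X_c = −((1+c)/(2√c))H + B − C acts in the positive (respectively negative) discrete series representation of su(1,1). -/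

import Mathlib

open Finset

/-- Pochhammer symbol `(q)_m = q(q+1)⋯(q+m−1)` for a real `q`. -/
noncomputable def poch (q : ℝ) (m : ℕ) : ℝ := ∏ l ∈ Finset.range m, (q + l)

/-- The Meixner polynomial
`M_n(x; β, c) = ∑_{j=0}^n ((−n)_j (−x)_j/((β)_j j!)) (1 − 1/c)^j = ₂F₁(−n,−x;β;1−1/c)`. -/
noncomputable def meixner (n x : ℕ) (β c : ℝ) : ℝ :=
  ∑ j ∈ Finset.range (n + 1),
    poch (-(n : ℝ)) j * poch (-(x : ℝ)) j / (poch β j * (j.factorial : ℝ)) * (1 - 1 / c) ^ j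

/-- The orthonormal Meixner polynomial `M̂_n(x; β, c) = √((β)_n c^n/n!) M_n(x; β, c)`. -/
noncomputable def meixnerHat (n x : ℕ) (β c : ℝ) : ℝ :=
  Real.sqrt (poch β n * c ^ n / (n.factorial : ℝ)) * meixner n x β c

/-- The Meixner weight `w(x; β, c) = ((β)_x/x!) c^x (1−c)^β`. -/
noncomputable def meixnerWeight (x : ℕ) (β c : ℝ) : ℝ :=
  poch β x / (x.factorial : ℝ) * c ^ x * (1 - c) ^ β

open Filter Topology

lemma poch_succ (q : ℝ) (m : ℕ) : poch q (m + 1) = poch q m * (q + m) := by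
  simp [poch, Finset.prod_range_succ]

lemma poch_zero (q : ℝ) : poch q 0 = 1 := by simp [poch]

lemma poch_succ' (q : ℝ) (m : ℕ) : poch q (m + 1) = q * poch (q + 1) m := by
  induction m with
  | zero => simp [poch]
  | succ m ih => rw [poch_succ, ih, poch_succ]; push_cast; ring

lemma poch_pos {q : ℝ} (hq : 0 < q) (m : ℕ) : 0 < poch q m :=
  Finset.prod_pos fun i _ => by positivity

lemma poch_neg_eq_zero {n j : ℕ} (h : n < j) : poch (-(n : ℝ)) j = 0 :=
  Finset.prod_eq_zero (Finset.mem_range.2 h) (by simp)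

/-- the summand -/
noncomputable def mterm (a b β c : ℝ) (j : ℕ) : ℝ :=
  poch a j * poch b j / (poch β j * (j.factorial : ℝ)) * (1 - 1 / c) ^ j

lemma meixner_eq_sum {n N : ℕ} (x : ℕ) (β c : ℝ) (h : n < N) :
    meixner n x β c = ∑ j ∈ Finset.range N, mterm (-n) (-x) β c j := by
  unfold meixner
  apply Finset.sum_subset (by intro j; simp; omega)
  intro j _ hj
  have : n < j := by simp at hj; omega
  simp [poch_neg_eq_zero this]

lemma meixner_symm (n x : ℕ) (β c : ℝ) : meixner n x β c = meixner x n β c := by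
  rw [meixner_eq_sum x β c (show n < n + x + 1 by omega),
    meixner_eq_sum n β c (show x < n + x + 1 by omega)]
  refine Finset.sum_congr rfl fun j _ => ?_
  simp only [mterm]; ring

lemma mterm_succ {β c : ℝ} (hβ : 0 < β) (hc : 0 < c) (a b : ℝ) (j : ℕ) :
    c * (β + j) * (j + 1) * mterm a b β c (j + 1) =
      (c - 1) * (a + j) * (b + j) * mterm a b β c j := by
  have h1 := (poch_pos hβ j).ne'
  have h2 : (j.factorial : ℝ) ≠ 0 := by positivity
  have h3 : β + j ≠ 0 := by positivity
  simp only [mterm, poch_succ, Nat.factorial_succ, pow_succ]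
  push_cast
  field_simp

lemma rec_aux {β c : ℝ} (hβ : 0 < β) (hc : 0 < c) (a b : ℝ) (K : ℕ) :
    c * (β - a) * (∑ j ∈ range (K + 1), mterm (a - 1) b β c j -
        ∑ j ∈ range (K + 1), mterm a b β c j) +
      a * (∑ j ∈ range (K + 1), mterm a b β c j - ∑ j ∈ range (K + 1), mterm (a + 1) b β c j)
      + (c - 1) * b * ∑ j ∈ range (K + 1), mterm a b β c j =
    (c - 1) * (b + K) * mterm a b β c K := by
  induction K with
  | zero => simp [mterm, poch]
  | succ K ih =>
    simp only [Finset.sum_range_succ _ (K + 1)]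
    set S1 := ∑ j ∈ range (K + 1), mterm (a - 1) b β c j
    set S2 := ∑ j ∈ range (K + 1), mterm a b β c j
    set S3 := ∑ j ∈ range (K + 1), mterm (a + 1) b β c j
    have h3 : a * mterm (a + 1) b β c (K + 1) = (a + (K + 1 : ℕ)) * mterm a b β c (K + 1) := by
      have := poch_succ' a (K + 1)
      rw [poch_succ] at this
      simp only [mterm]
      linear_combination (-1) * this * (poch b (K + 1) / (poch β (K + 1) * ((K + 1).factorial : ℝ)) * (1 - 1 / c) ^ (K + 1))
    obtain ⟨r, hr⟩ : ∃ r, r = poch b (K + 1) / (poch β (K + 1) * ((K + 1).factorial : ℝ)) * (1 - 1 / c) ^ (K + 1) := ⟨_, rfl⟩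
    have e1 : mterm (a - 1) b β c (K + 1) = (a - 1) * poch a K * r := by
      rw [hr, mterm, poch_succ' (a - 1)]; simp; ring
    have e2 : mterm a b β c (K + 1) = poch a K * (a + K) * r := by
      rw [hr, mterm, poch_succ a]; ring
    have e4 : (c - 1) * (b + K) * mterm a b β c K = c * (β + K) * (K + 1) * (poch a K * r) := by
      have h1 := (poch_pos hβ K).ne'
      have h2 : (K.factorial : ℝ) ≠ 0 := by positivity
      have h3 : β + K ≠ 0 := by positivity
      rw [hr]
      simp only [mterm, poch_succ, Nat.factorial_succ, pow_succ]
      push_cast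
      field_simp
    rw [e4] at ih
    rw [e2] at h3 ⊢
    rw [e1]
    push_cast at h3 ⊢
    linear_combination ih - h3

lemma meixner_rec {β c : ℝ} (hβ : 0 < β) (hc : 0 < c) (n x : ℕ) :
    c * (n + β) * (meixner (n + 1) x β c - meixner n x β c) -
      n * (meixner n x β c - meixner (n - 1) x β c) = (c - 1) * x * meixner n x β c := by
  have h := rec_aux hβ hc (-(n : ℝ)) (-(x : ℝ)) (n + 1)
  rw [meixner_eq_sum x β c (show n + 1 < n + 1 + 1 by omega),
    meixner_eq_sum x β c (show n < n + 1 + 1 by omega),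
    meixner_eq_sum x β c (show n - 1 < n + 1 + 1 by omega)]
  have z : mterm (-(n : ℝ)) (-(x : ℝ)) β c (n + 1) = 0 := by
    simp [mterm, poch_neg_eq_zero (Nat.lt_succ_self n)]
  have e : (-((n + 1 : ℕ) : ℝ)) = -n - 1 := by push_cast; ring
  rw [z] at h
  rw [e]
  rcases Nat.eq_zero_or_pos n with rfl | hn
  · simp at h ⊢
    linear_combination h
  · have e' : (-((n - 1 : ℕ) : ℝ)) = -n + 1 := by
      rw [Nat.cast_sub hn]; push_cast; ring
    rw [e']
    linear_combination h

/-- `a_n` -/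
noncomputable def acoef (β c : ℝ) (n : ℕ) : ℝ := poch β n * c ^ n / (n.factorial : ℝ)

lemma acoef_pos {β c : ℝ} (hβ : 0 < β) (hc : 0 < c) (n : ℕ) : 0 < acoef β c n := by
  have := poch_pos hβ n
  unfold acoef; positivity

lemma acoef_succ (β c : ℝ) (n : ℕ) :
    (n + 1) * acoef β c (n + 1) = c * (n + β) * acoef β c n := by
  have h2 : (n.factorial : ℝ) ≠ 0 := by positivity
  simp only [acoef, poch_succ, Nat.factorial_succ, pow_succ]
  push_cast
  field_simp
  ring

lemma poch_eq_asc (β : ℝ) (n : ℕ) : poch β n = (ascPochhammer ℝ n).eval β := by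
  induction n with
  | zero => simp [poch]
  | succ n ih => rw [poch_succ, ascPochhammer_succ_eval, ih]

lemma acoef_hasSum {β c : ℝ} (hc0 : 0 < c) (hc1 : c < 1) :
    HasSum (acoef β c) (1 / (1 - c) ^ β) := by
  have h := (Real.one_div_one_sub_rpow_hasFPowerSeriesOnBall_zero β).hasSum (y := c)
    (by
      rw [Metric.mem_eball, edist_zero_right, ← ofReal_norm, Real.norm_of_nonneg hc0.le,
        ENNReal.ofReal_lt_one]
      exact hc1)
  simp only [zero_add] at h
  convert! h using 1
  funext n
  have h2 : (n.factorial : ℝ) ≠ 0 := by positivity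
  have e := Ring.factorial_nsmul_multichoose_eq_ascPochhammer β n
  rw [Ring.multichoose_eq] at e
  have e3 : (n.factorial : ℝ) * Ring.choose (β + n - 1) n = poch β n := by
    rw [poch_eq_asc, ← Polynomial.ascPochhammer_smeval_eq_eval, ← e, nsmul_eq_mul]
  simp [FormalMultilinearSeries.ofScalars]
  rw [acoef, ← e3]
  field_simp

lemma acoef_summable_pow {β c : ℝ} (hβ : 0 < β) (hc0 : 0 < c) (hc1 : c < 1) (m : ℕ) :
    Summable fun n : ℕ => acoef β c n * (n : ℝ) ^ m := by
  apply summable_of_ratio_test_tendsto_lt_one hc1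
  · filter_upwards [eventually_gt_atTop 0] with n hn
    have := acoef_pos hβ hc0 n
    positivity
  · have t0 : Tendsto (fun n : ℕ => (1 : ℝ) / n) atTop (𝓝 0) :=
      tendsto_const_div_atTop_nhds_zero_nat 1
    have t1 : Tendsto (fun n : ℕ => c * ((1 + β * (1 / (n : ℝ))) / (1 + 1 / (n : ℝ))) *
        (1 + 1 / (n : ℝ)) ^ m) atTop (𝓝 (c * ((1 + β * 0) / (1 + 0)) * (1 + 0) ^ m)) :=
      (tendsto_const_nhds.mul ((tendsto_const_nhds.add (tendsto_const_nhds.mul t0)).div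
        (tendsto_const_nhds.add t0) (by norm_num))).mul ((tendsto_const_nhds.add t0).pow m)
    have t2 : c * ((1 + β * 0) / (1 + 0)) * (1 + 0) ^ m = c := by simp
    rw [t2] at t1
    refine t1.congr' ?_
    filter_upwards [eventually_gt_atTop 0] with n hn
    have p1 := acoef_pos hβ hc0 n
    have p2 := acoef_pos hβ hc0 (n + 1)
    have hn' : (0 : ℝ) < n := by exact_mod_cast hn
    have e : acoef β c (n + 1) = c * (n + β) * acoef β c n / (n + 1) := by
      rw [← acoef_succ]; field_simp
    rw [Real.norm_of_nonneg (by positivity), Real.norm_of_nonneg (by positivity), e]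
    have e3 : (1 + 1 / (n : ℝ)) = (n + 1) / n := by field_simp
    rw [e3, div_pow]
    push_cast
    field_simp

lemma acoef_summable_poly {β c : ℝ} (hβ : 0 < β) (hc0 : 0 < c) (hc1 : c < 1) (p : Polynomial ℝ) :
    Summable fun n : ℕ => acoef β c n * p.eval (n : ℝ) := by
  induction p using Polynomial.induction_on' with
  | add p q hp hq => simpa [mul_add] using hp.add hq
  | monomial m r =>
    simpa [mul_left_comm, mul_comm, mul_assoc] using (acoef_summable_pow hβ hc0 hc1 m).mul_left r

lemma meixner_poly (β c : ℝ) (x : ℕ) :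
    ∃ p : Polynomial ℝ, ∀ n : ℕ, meixner n x β c = p.eval (n : ℝ) := by
  refine ⟨∑ j ∈ range (x + 1), Polynomial.C (poch (-(x : ℝ)) j / (poch β j * (j.factorial : ℝ)) *
    (1 - 1 / c) ^ j) * ∏ l ∈ range j, (- Polynomial.X + Polynomial.C (l : ℝ)), fun n => ?_⟩
  rw [meixner_symm]
  simp only [meixner, Polynomial.eval_finsetSum, Polynomial.eval_mul, Polynomial.eval_C,
    Polynomial.eval_prod, Polynomial.eval_add, Polynomial.eval_neg, Polynomial.eval_X]
  refine Finset.sum_congr rfl fun j _ => ?_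
  simp only [poch]; ring

lemma meixner_summable {β c : ℝ} (hβ : 0 < β) (hc0 : 0 < c) (hc1 : c < 1) (x y : ℕ) :
    Summable fun n : ℕ => acoef β c n * (meixner n x β c * meixner n y β c) := by
  obtain ⟨p, hp⟩ := meixner_poly β c x
  obtain ⟨q, hq⟩ := meixner_poly β c y
  simpa [hp, hq] using acoef_summable_poly hβ hc0 hc1 (p * q)

lemma meixner_orth {β c : ℝ} (hβ : 0 < β) (hc0 : 0 < c) (hc1 : c < 1) {x y : ℕ} (hxy : x ≠ y) :
    HasSum (fun n : ℕ => acoef β c n * (meixner n x β c * meixner n y β c)) 0 := by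
  have hs := meixner_summable hβ hc0 hc1 x y
  set W : ℕ → ℝ := fun n => n * acoef β c n * (meixner n x β c * meixner (n - 1) y β c -
    meixner n y β c * meixner (n - 1) x β c) with hW
  have tel : ∀ N, ∑ n ∈ range N, (c - 1) * (x - y) *
      (acoef β c n * (meixner n x β c * meixner n y β c)) = W N := by
    intro N
    induction N with
    | zero => simp [hW]
    | succ N ih =>
      rw [Finset.sum_range_succ, ih]
      have h1 := meixner_rec hβ hc0 N x
      have h2 := meixner_rec hβ hc0 N y
      have h3 := acoef_succ β c N
      simp only [hW, Nat.add_sub_cancel]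
      push_cast
      rw [h3]
      linear_combination (-acoef β c N) * (meixner N y β c) * h1 +
        (acoef β c N) * (meixner N x β c) * h2
  have lim0 : Tendsto W atTop (𝓝 0) := by
    rw [← tendsto_add_atTop_iff_nat 1]
    obtain ⟨p, hp⟩ := meixner_poly β c x
    obtain ⟨q, hq⟩ := meixner_poly β c y
    have := (acoef_summable_poly hβ hc0 hc1 (Polynomial.C c * (Polynomial.X + Polynomial.C β) *
      (p.comp (Polynomial.X + 1) * q - q.comp (Polynomial.X + 1) * p))).tendsto_atTop_zero
    refine this.congr fun n => ?_
    have h3 := acoef_succ β c n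
    simp only [hW, Nat.add_sub_cancel]
    push_cast
    rw [h3]
    simp [hp, hq]
    ring
  have h1 := (hs.mul_left ((c - 1) * ((x : ℝ) - y))).hasSum.tendsto_sum_nat
  simp only [tel] at h1
  have h2 := tendsto_nhds_unique h1 lim0
  rw [tsum_mul_left] at h2
  have h3 : (c - 1) * ((x : ℝ) - y) ≠ 0 :=
    mul_ne_zero (by linarith) (sub_ne_zero.2 (by exact_mod_cast hxy))
  have h4 := (mul_eq_zero.1 h2).resolve_left h3
  rw [← h4]; exact hs.hasSum

lemma meixner_norm {β c : ℝ} (hβ : 0 < β) (hc0 : 0 < c) (hc1 : c < 1) (x : ℕ) :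
    HasSum (fun n : ℕ => acoef β c n * (meixner n x β c * meixner n x β c))
      (1 / (1 - c) ^ β / acoef β c x) := by
  induction x with
  | zero =>
    have e : ∀ n, meixner n 0 β c = 1 := fun n => by
      rw [meixner_symm]; simp [meixner, poch]
    have e' : acoef β c 0 = 1 := by simp [acoef, poch]
    simpa [e, e'] using acoef_hasSum (β := β) hc0 hc1
  | succ x ih =>
    have o1 := meixner_orth hβ hc0 hc1 (show x ≠ x + 1 by omega)
    have o2 := meixner_orth hβ hc0 hc1 (show x ≠ x + 2 by omega)
    have o3 := meixner_orth hβ hc0 hc1 (show x - 1 ≠ x + 1 by omega)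
    have hpos : c * ((x : ℝ) + β) ≠ 0 := by positivity
    have key := ((((ih.mul_left ((x : ℝ) + 1)).add
      (o1.mul_left (c * (x + β) + x - c * (x + 1 + β) - (x + 1)))).add
      (o2.mul_left (c * (x + 1 + β)))).add (o3.mul_left (-(x : ℝ)))).mul_left (1 / (c * (x + β)))
    have p1 := (acoef_pos hβ hc0 x).ne'
    have p2 := (acoef_pos hβ hc0 (x + 1)).ne'
    convert! key using 1
    · funext n
      have h1 := meixner_rec hβ hc0 x n
      have h2 := meixner_rec hβ hc0 (x + 1) n
      simp only [meixner_symm _ n, Nat.add_sub_cancel] at h1 h2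
      push_cast at h2
      rw [one_div, eq_inv_mul_iff_mul_eq₀ hpos]
      linear_combination acoef β c n * (meixner n (x + 1) β c) * h1 -
        acoef β c n * (meixner n x β c) * h2
    · have h3 := acoef_succ β c x
      have hw : (1 - c) ^ β ≠ 0 := (Real.rpow_pos_of_pos (by linarith) β).ne'
      have hx : (x : ℝ) + β ≠ 0 := by positivity
      simp only [mul_zero, add_zero]
      field_simp
      linear_combination (-1) * h3

/-- the vector `v⁽ˣ⁾` -/
noncomputable def uvec (β c : ℝ) (x n : ℕ) : ℝ :=
  meixnerHat n x β c * Real.sqrt (meixnerWeight x β c)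

lemma meixnerWeight_eq (x : ℕ) (β c : ℝ) :
    meixnerWeight x β c = acoef β c x * (1 - c) ^ β := by
  simp only [meixnerWeight, acoef]; ring

lemma uvec_eq {β c : ℝ} (hc1 : c < 1) (x n : ℕ) :
    uvec β c x n = Real.sqrt (acoef β c n) * meixner n x β c *
      (Real.sqrt (acoef β c x) * Real.sqrt ((1 - c) ^ β)) := by
  have hw := Real.rpow_pos_of_pos (show 0 < 1 - c by linarith) β
  rw [uvec, meixnerWeight_eq, Real.sqrt_mul' _ hw.le]; rfl

lemma uvec_symm {β c : ℝ} (hc1 : c < 1) (x n : ℕ) : uvec β c x n = uvec β c n x := by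
  rw [uvec_eq hc1, uvec_eq hc1, meixner_symm]; ring

lemma uvec_hasSum {β c : ℝ} (hβ : 0 < β) (hc0 : 0 < c) (hc1 : c < 1) (x y : ℕ) :
    HasSum (fun n => uvec β c x n * uvec β c y n) (if x = y then 1 else 0) := by
  have hw := Real.rpow_pos_of_pos (show 0 < 1 - c by linarith) β
  have ha := acoef_pos hβ hc0
  have e : ∀ n, uvec β c x n * uvec β c y n = (1 - c) ^ β * (Real.sqrt (acoef β c x) *
      Real.sqrt (acoef β c y)) * (acoef β c n * (meixner n x β c * meixner n y β c)) := by
    intro n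
    rw [uvec_eq hc1, uvec_eq hc1]
    have h1 := Real.mul_self_sqrt (ha n).le
    have h2 := Real.mul_self_sqrt hw.le
    generalize Real.sqrt (acoef β c n) = r at *
    generalize Real.sqrt ((1 - c) ^ β) = s at *
    rw [← h1, ← h2]; ring
  simp only [e]
  split_ifs with h
  · subst h
    convert! (meixner_norm hβ hc0 hc1 x).mul_left _ using 1
    rw [Real.mul_self_sqrt (ha x).le]
    have := (ha x).ne'
    field_simp
  · simpa using (meixner_orth hβ hc0 hc1 h).mul_left ((1 - c) ^ β * (Real.sqrt (acoef β c x) *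
      Real.sqrt (acoef β c y)))

lemma uvec_memlp {β c : ℝ} (hβ : 0 < β) (hc0 : 0 < c) (hc1 : c < 1) (x : ℕ) :
    Memℓp (uvec β c x) 2 := by
  apply memℓp_gen
  have := (uvec_hasSum hβ hc0 hc1 x x).summable
  simpa [sq] using this

/-- For `k > 0` and `0 < c < 1`, the vectors `v⁽ˣ⁾_n = M̂_n(x; 2k, c)√(w(x; 2k, c))`,
`x ∈ ℕ`, lie in `ℓ²(ℕ; ℝ)` and form an orthonormal basis there; moreover each `v⁽ˣ⁾`
satisfies the three-term recurrence
`√(n(2k+n−1)) v⁽ˣ⁾_{n−1} − ((1+c)(k+n)/√c) v⁽ˣ⁾_n + √((n+1)(2k+n)) v⁽ˣ⁾_{n+1}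
  = ((c−1)(x+k)/√c) v⁽ˣ⁾_n`,
i.e. `v⁽ˣ⁾` is a unit eigenvector of `π_k^±(X_c)` with eigenvalue `±(c−1)(x+k)/√c`. -/
theorem meixner_eigenvectors_discrete_series (k c : ℝ) (hk : 0 < k) (hc0 : 0 < c)
    (hc1 : c < 1) :
    ∃ V : ℕ → lp (fun _ : ℕ => ℝ) 2,
      (∀ x n : ℕ, (V x : ∀ _ : ℕ, ℝ) n =
        meixnerHat n x (2 * k) c * Real.sqrt (meixnerWeight x (2 * k) c)) ∧
      Orthonormal ℝ V ∧
      (Submodule.span ℝ (Set.range V)).topologicalClosure = ⊤ ∧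
      (∀ x n : ℕ,
        Real.sqrt ((n : ℝ) * (2 * k + n - 1)) *
            (if n = 0 then 0 else (V x : ∀ _ : ℕ, ℝ) (n - 1)) -
          (1 + c) * (k + n) / Real.sqrt c * (V x : ∀ _ : ℕ, ℝ) n +
          Real.sqrt (((n : ℝ) + 1) * (2 * k + n)) * (V x : ∀ _ : ℕ, ℝ) (n + 1) =
        (c - 1) * ((x : ℝ) + k) / Real.sqrt c * (V x : ∀ _ : ℕ, ℝ) n) := by
  have hβ : 0 < 2 * k := by positivity
  obtain ⟨V, hV⟩ : ∃ V : ℕ → lp (fun _ : ℕ => ℝ) 2,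
      ∀ x n : ℕ, (V x : ∀ _ : ℕ, ℝ) n = uvec (2 * k) c x n :=
    ⟨fun x => ⟨uvec (2 * k) c x, uvec_memlp hβ hc0 hc1 x⟩, fun x n => rfl⟩
  have hon : Orthonormal ℝ V := by
    rw [orthonormal_iff_ite]
    intro x y
    rw [← (uvec_hasSum hβ hc0 hc1 x y).tsum_eq, lp.inner_eq_tsum]
    refine tsum_congr fun n => ?_
    simp [hV, mul_comm]
  have hsingle : ∀ m, lp.single 2 m (1 : ℝ) ∈
      (Submodule.span ℝ (Set.range V)).topologicalClosure := by
    intro m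
    have h1 := hon.orthogonalFamily.hasSum_linearIsometry (V m)
    set g := hon.orthogonalFamily.linearIsometry (V m) with hg
    have h2 : HasSum (fun x => (V m : ∀ _ : ℕ, ℝ) x • V x) g := by
      simpa [LinearIsometry.toSpanSingleton_apply] using h1
    have h3 : g = lp.single 2 m (1 : ℝ) := by
      ext n
      have h4 := h2.mapL (innerSL ℝ (lp.single 2 n (1 : ℝ) : lp (fun _ : ℕ => ℝ) 2))
      have h5 : HasSum (fun x => uvec (2 * k) c m x * uvec (2 * k) c n x) (g n) := by
        simpa [lp.inner_single_left, inner_smul_right, hV, uvec_symm hc1 _ n] using h4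
      rw [h5.unique (uvec_hasSum hβ hc0 hc1 m n)]
      by_cases h : m = n
      · subst h; simp
      · simp [h, lp.single_apply, Pi.single_apply, Ne.symm h]
    rw [← h3]
    refine (Submodule.isClosed_topologicalClosure _).mem_of_tendsto h2
      (Eventually.of_forall fun s => ?_)
    exact Submodule.sum_mem _ fun x _ => Submodule.smul_mem _ _
      (Submodule.le_topologicalClosure _ (Submodule.subset_span ⟨x, rfl⟩))
  refine ⟨V, fun x n => by rw [hV]; rfl, hon, ?_, ?_⟩
  · have : CompleteSpace (Submodule.span ℝ (Set.range V)).topologicalClosure :=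
      (Submodule.isClosed_topologicalClosure _).completeSpace_coe
    rw [← Submodule.orthogonal_eq_bot_iff, Submodule.eq_bot_iff]
    intro f hf
    ext m
    have h := (Submodule.mem_orthogonal _ f).1 hf _ (hsingle m)
    simpa [lp.inner_single_left] using h
  · intro x n
    simp only [hV]
    have hs : Real.sqrt c ≠ 0 := (Real.sqrt_pos.2 hc0).ne'
    have hr := meixner_rec hβ hc0 n x
    have hss : Real.sqrt c * Real.sqrt c = c := Real.mul_self_sqrt hc0.le
    have h1 : Real.sqrt (((n : ℝ) + 1) * (2 * k + n)) * Real.sqrt (acoef (2 * k) c (n + 1)) =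
        Real.sqrt c * (2 * k + n) * Real.sqrt (acoef (2 * k) c n) := by
      rw [← Real.sqrt_mul (by positivity), show ((n : ℝ) + 1) * (2 * k + n) * acoef (2 * k) c (n + 1) =
        (2 * k + n) ^ 2 * (c * acoef (2 * k) c n) by
          linear_combination (2 * k + n) * acoef_succ (2 * k) c n,
        Real.sqrt_mul (by positivity), Real.sqrt_sq (by positivity), Real.sqrt_mul hc0.le]
      ring
    have h0 : Real.sqrt ((n : ℝ) * (2 * k + n - 1)) *
        (if n = 0 then 0 else uvec (2 * k) c x (n - 1)) = n / Real.sqrt c *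
        (Real.sqrt (acoef (2 * k) c n) * meixner (n - 1) x (2 * k) c *
          Real.sqrt (meixnerWeight x (2 * k) c)) := by
      rcases n with _ | n
      · simp
      · have h2 : Real.sqrt c * (Real.sqrt (((n : ℝ) + 1) * (2 * k + n)) *
            Real.sqrt (acoef (2 * k) c n)) = (n + 1) * Real.sqrt (acoef (2 * k) c (n + 1)) := by
          have := acoef_pos hβ hc0 n
          rw [← Real.sqrt_mul (by positivity), ← Real.sqrt_mul hc0.le,
            show c * (((n : ℝ) + 1) * (2 * k + n) * acoef (2 * k) c n) =
              ((n : ℝ) + 1) ^ 2 * acoef (2 * k) c (n + 1) by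
              linear_combination (-(n + 1 : ℝ)) * acoef_succ (2 * k) c n,
            Real.sqrt_mul (by positivity), Real.sqrt_sq (by positivity)]
        simp only [Nat.add_sub_cancel, uvec, meixnerHat, Nat.succ_ne_zero, if_false]
        push_cast
        rw [show 2 * k + ((n : ℝ) + 1) - 1 = 2 * k + n by ring]
        change _ * (Real.sqrt (acoef (2 * k) c n) * _ * _) = _
        rw [div_mul_eq_mul_div, eq_div_iff hs]
        linear_combination (meixner n x (2 * k) c * Real.sqrt (meixnerWeight x (2 * k) c)) * h2
    rw [h0]
    change _ - _ * (Real.sqrt (acoef (2 * k) c n) * _ * _) +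
      _ * (Real.sqrt (acoef (2 * k) c (n + 1)) * _ * _) =
      _ * (Real.sqrt (acoef (2 * k) c n) * _ * _)
    rw [← mul_assoc (Real.sqrt (((n : ℝ) + 1) * (2 * k + n))),
      ← mul_assoc (Real.sqrt (((n : ℝ) + 1) * (2 * k + n))), h1]
    field_simp
    rw [show Real.sqrt c ^ 2 = c by rw [sq, hss]]
    linear_combination (Real.sqrt (acoef (2 * k) c n) * Real.sqrt (meixnerWeight x (2 * k) c)) * hr
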